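/- Let r₁, r₂ ∈ ℤ × ℤ be primitive vectors (i.e., the two coordinates of each vector are coprime), and set Δ = |r₁.1·r₂.2 − r₁.2·r₂.1|. If Δ ≥ 3, then there exists a natural number q with 1 ≤ q, 2q < Δ, gcd(q, Δ) = 1, such that either Δ divides both r₂.1 − q·r₁.1 and r₂.2 − q·r₁.2, or Δ divides both r₂.1 + q·r₁.1 and r₂.2 + q·r₁.2. Moreover, if Δ = 4 then q = 1, and if Δ = 5 then q = 1 or q = 2. -/

import Mathlib

/-!
Pairing `r₂` with a Bézout dual of the primitive vector `r₁` gives a scalar `k` with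
`r₂ ≡ k • r₁ (mod Δ)`, because the determinant of `r₁` and `r₂` vanishes modulo `Δ`. Primitivity of
`r₂` makes `k` a unit modulo `Δ`, and the jumping number is the absolute value of the residue of `k`
closest to `0`: that residue can be neither `0` nor `Δ / 2`, since these are not units when `3 ≤ Δ`.
-/

section CommRing

variable {R : Type*} [CommRing R] {a b c d n : R}

theorem exists_dvd_sub_mul_of_dvd_det (hab : IsCoprime a b) (hdet : n ∣ a * d - b * c) :
    ∃ k, n ∣ c - k * a ∧ n ∣ d - k * b := by
  obtain ⟨u, v, huv⟩ := hab
  refine ⟨u * c + v * d, ?_, ?_⟩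
  · have hc : c - (u * c + v * d) * a = -v * (a * d - b * c) := by
      linear_combination (-c) * huv
    exact hc ▸ hdet.mul_left (-v)
  · have hd : d - (u * c + v * d) * b = u * (a * d - b * c) := by
      linear_combination (-d) * huv
    exact hd ▸ hdet.mul_left u

theorem isCoprime_of_dvd_sub_mul {k : R} (hcd : IsCoprime c d) (hc : n ∣ c - k * a)
    (hd : n ∣ d - k * b) : IsCoprime k n := by
  obtain ⟨s, t, hst⟩ := hcd
  obtain ⟨x, hx⟩ := hc
  obtain ⟨y, hy⟩ := hd
  exact ⟨s * a + t * b, s * x + t * y, by linear_combination hst - s * hx - t * hy⟩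

end CommRing

theorem two_mul_natAbs_bmod_le (k : ℤ) {n : ℕ} (hn : 0 < n) : 2 * (k.bmod n).natAbs ≤ n := by
  have hlower := Int.le_bmod (x := k) hn
  have hupper := Int.bmod_le (x := k) hn
  omega

theorem pos_and_two_mul_lt_of_coprime {q n : ℕ} (hqn : q.Coprime n) (hle : 2 * q ≤ n)
    (hn : 3 ≤ n) : 0 < q ∧ 2 * q < n := by
  have hq_ne_zero : q ≠ 0 := by
    rintro rfl
    rw [Nat.coprime_zero_left] at hqn
    omega
  have hne : 2 * q ≠ n := by
    intro h
    have hq_one : q = 1 := hqn.eq_one_of_dvd (h ▸ dvd_mul_left q 2)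
    omega
  omega

theorem exists_coprime_two_mul_lt_modEq_or_neg_modEq {k : ℤ} {n : ℕ} (hkn : IsCoprime k n)
    (hn : 3 ≤ n) :
    ∃ q : ℕ, 0 < q ∧ 2 * q < n ∧ q.Coprime n ∧ ((q : ℤ) ≡ k [ZMOD n] ∨ -(q : ℤ) ≡ k [ZMOD n]) := by
  have hmod : k.bmod n ≡ k [ZMOD n] := Int.bmod_emod
  have hcop : (k.bmod n).natAbs.Coprime n := by
    rw [← Int.bmod_add_bdiv k n] at hkn
    exact Int.isCoprime_iff_gcd_eq_one.1 hkn.of_add_mul_left_left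
  obtain ⟨hpos, hlt⟩ :=
    pos_and_two_mul_lt_of_coprime hcop (two_mul_natAbs_bmod_le k (by omega)) hn
  refine ⟨(k.bmod n).natAbs, hpos, hlt, hcop, ?_⟩
  rcases Int.natAbs_eq (k.bmod n) with h | h
  · exact .inl (h ▸ hmod)
  · exact .inr (h ▸ hmod)

/-- The jumping number of two slopes on a torus: if `r₁, r₂` are primitive
vectors in `ℤ × ℤ` and `Δ = |r₁.1·r₂.2 − r₁.2·r₂.1| ≥ 3`, then there is a
jumping number `q` with `1 ≤ q`, `2q < Δ`, `gcd(q, Δ) = 1` such that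
`r₂ ≡ ±q·r₁ (mod Δ)` componentwise; moreover `q = 1` if `Δ = 4`, and
`q = 1` or `2` if `Δ = 5`. -/
theorem jumping_number (r₁ r₂ : ℤ × ℤ)
    (h₁ : IsCoprime r₁.1 r₁.2) (h₂ : IsCoprime r₂.1 r₂.2)
    (Δ : ℕ) (hΔ : Δ = (r₁.1 * r₂.2 - r₁.2 * r₂.1).natAbs) (h3 : 3 ≤ Δ) :
    ∃ q : ℕ, 1 ≤ q ∧ 2 * q < Δ ∧ Nat.gcd q Δ = 1 ∧
      (((Δ : ℤ) ∣ r₂.1 - (q : ℤ) * r₁.1 ∧ (Δ : ℤ) ∣ r₂.2 - (q : ℤ) * r₁.2) ∨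
       ((Δ : ℤ) ∣ r₂.1 + (q : ℤ) * r₁.1 ∧ (Δ : ℤ) ∣ r₂.2 + (q : ℤ) * r₁.2)) ∧
      (Δ = 4 → q = 1) ∧ (Δ = 5 → q = 1 ∨ q = 2) := by
  have hdet : (Δ : ℤ) ∣ r₁.1 * r₂.2 - r₁.2 * r₂.1 := hΔ ▸ Int.natAbs_dvd.2 dvd_rfl
  obtain ⟨k, hk_fst, hk_snd⟩ := exists_dvd_sub_mul_of_dvd_det h₁ hdet
  have hkΔ : IsCoprime k Δ := isCoprime_of_dvd_sub_mul h₂ hk_fst hk_snd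
  obtain ⟨q, hq_pos, hq_lt, hqΔ, hqk⟩ := exists_coprime_two_mul_lt_modEq_or_neg_modEq hkΔ h3
  refine ⟨q, hq_pos, hq_lt, hqΔ, ?_, by omega, by omega⟩
  rw [← Int.modEq_iff_dvd] at hk_fst hk_snd
  rcases hqk with hqk | hqk
  · exact .inl ⟨((hqk.mul_right _).trans hk_fst).dvd, ((hqk.mul_right _).trans hk_snd).dvd⟩
  · right
    simpa only [neg_mul, sub_neg_eq_add] using
      And.intro ((hqk.mul_right _).trans hk_fst).dvd ((hqk.mul_right _).trans hk_snd).dvd
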